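/- Suppose the error grid functions e^n : ℤ → ℝ satisfy e^0_j = 0 for all j, e^n_j = 0 for |j| ≥ J and all n, and for every n ≥ 0 and every j with |j| < J the recursion e^{n+1}_j = e^n_j − Δt ε C_α ζ(α−1) h^{−α}(e^n_{j−1} − 2e^n_j + e^n_{j+1}) + Δt ε C_α h Σ''_{k=−J−j, k≠0}^{J−j} (e^n_{j+k} − e^n_j)/|kh|^{1+α} − Δt T^n_j, where the truncation errors satisfy |T^n_j| ≤ T̄ for all n and all |j| < J. If the CFL-type condition Δt/h^α ≤ 1/(2 ε C_α (1 + 1/α − ζ(α−1))) holds, then for every n ≥ 0 and every j ∈ ℤ, |e^n_j| ≤ n · Δt · T̄. -/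

import Mathlib

open scoped BigOperators

/-- The constant `C_α = α Γ((1+α)/2) / (2^{1-α} √π Γ(1-α/2))`. -/
noncomputable def Cconst (α : ℝ) : ℝ :=
  α * Real.Gamma ((1 + α) / 2) /
    ((2 : ℝ) ^ (1 - α) * Real.sqrt Real.pi * Real.Gamma (1 - α / 2))

/-- The real value of the Riemann zeta function at a real argument. -/
noncomputable def zetaR (s : ℝ) : ℝ := (riemannZeta (s : ℂ)).re

/-- The double-primed sum `Σ''_{k=a, k≠0}^{b} g(k)`: the sum over integers `a ≤ k ≤ b`,
omitting `k = 0`, where the end terms `k = a` and `k = b` carry weight `1/2`. -/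
noncomputable def dsum (a b : ℤ) (g : ℤ → ℝ) : ℝ :=
  ∑ k ∈ (Finset.Icc a b).erase 0, (if k = a ∨ k = b then (1 : ℝ) / 2 else 1) * g k

/-!
One step of the scheme is `u ↦ u + Δt ε C_α L u` followed by the truncation error, where
`(L u)_j` is a combination of the differences `u_{j+k} - u_j`. Its coefficients are nonnegative
because `ζ(α - 1) < 0`, and their total is at most `2 h^{-α} (1 + 1/α - ζ(α - 1))` because
`∑_{k ≥ 1} k^{-(1+α)} ≤ 1 + 1/α`. The CFL condition therefore makes the update a convex
combination of the old values: it does not increase the supremum norm, and each step adds at most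
`Δt T̄`.

The sign of `ζ` on `(-2, 1)` is read off from `2 π^{-s/2} Γ(s/2 + 1) ζ(s) = s Λ₀(s) - 1/(1 - s)`.
On the real line `Λ₀` is, up to rescaling, the Mellin transform of a nonnegative function built from
the theta kernel, so it is nonnegative and convex; it is at most `1` at the end points of `[0, 1]`.
-/

section RealMellin

open Set MeasureTheory

lemma convexOn_integral {E X : Type*} [AddCommGroup E] [Module ℝ E] [MeasurableSpace X]
    {μ : Measure X} {D : Set E} {F : E → X → ℝ} (hD : Convex ℝ D)
    (hF : ∀ᵐ x ∂μ, ConvexOn ℝ D fun y ↦ F y x) (hint : ∀ y ∈ D, Integrable (F y) μ) :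
    ConvexOn ℝ D fun y ↦ ∫ x, F y x ∂μ := by
  refine ⟨hD, fun y hy z hz a b ha hb hab ↦ ?_⟩
  have hy' : Integrable (fun x ↦ a * F y x) μ := (hint y hy).const_mul a
  have hz' : Integrable (fun x ↦ b * F z x) μ := (hint z hz).const_mul b
  calc ∫ x, F (a • y + b • z) x ∂μ
      ≤ ∫ x, a * F y x + b * F z x ∂μ :=
        integral_mono_ae (hint _ (hD hy hz ha hb hab)) (hy'.add hz')
          (hF.mono fun x hx ↦ hx.2 hy hz ha hb hab)
    _ = a • ∫ x, F y x ∂μ + b • ∫ x, F z x ∂μ := by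
        rw [integral_add hy' hz', integral_const_mul, integral_const_mul, smul_eq_mul, smul_eq_mul]

lemma re_cpow_sub_one_smul (f : ℝ → ℂ) (s : ℝ) {t : ℝ} (ht : 0 < t) :
    ((t : ℂ) ^ ((s : ℂ) - 1) • f t).re = t ^ (s - 1) * (f t).re := by
  rw [← Complex.ofReal_one, ← Complex.ofReal_sub, ← Complex.ofReal_cpow ht.le, smul_eq_mul,
    Complex.re_ofReal_mul]

variable {f : ℝ → ℂ}

lemma integrableOn_rpow_mul_re_of_mellinConvergent {s : ℝ} (hf : MellinConvergent f s) :
    IntegrableOn (fun t ↦ t ^ (s - 1) * (f t).re) (Ioi 0) :=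
  IntegrableOn.congr_fun hf.re (fun _ ht ↦ re_cpow_sub_one_smul f s ht) measurableSet_Ioi

lemma re_mellin_eq_integral {s : ℝ} (hf : MellinConvergent f s) :
    (mellin f s).re = ∫ t in Ioi 0, t ^ (s - 1) * (f t).re :=
  (integral_re hf).symm.trans <|
    setIntegral_congr_fun measurableSet_Ioi fun _ ht ↦ re_cpow_sub_one_smul f s ht

lemma re_mellin_nonneg {s : ℝ} (hf : MellinConvergent f s) (hpos : ∀ t, 0 < t → 0 ≤ (f t).re) :
    0 ≤ (mellin f s).re := by
  rw [re_mellin_eq_integral hf]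
  exact setIntegral_nonneg measurableSet_Ioi fun t ht ↦
    mul_nonneg (Real.rpow_nonneg (le_of_lt ht) _) (hpos t ht)

lemma convexOn_re_mellin {D : Set ℝ} (hD : Convex ℝ D)
    (hf : ∀ s ∈ D, MellinConvergent f s) (hpos : ∀ t, 0 < t → 0 ≤ (f t).re) :
    ConvexOn ℝ D fun s : ℝ ↦ (mellin f s).re := by
  have hconv (t : ℝ) (ht : 0 < t) : ConvexOn ℝ D fun s : ℝ ↦ t ^ (s - 1) * (f t).re := by
    have hrpow : ConvexOn ℝ D fun s : ℝ ↦ t ^ s := (convexOn_rpow_left ht).subset (subset_univ D) hD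
    refine (hrpow.smul (c := t⁻¹ * (f t).re) (by have := hpos t ht; positivity)).congr
      fun s _ ↦ ?_
    simp only [smul_eq_mul, Real.rpow_sub_one ht.ne']
    ring
  refine (convexOn_integral hD ((ae_restrict_iff' measurableSet_Ioi).2 (.of_forall hconv))
    fun s hs ↦ integrableOn_rpow_mul_re_of_mellinConvergent (hf s hs)).congr fun s hs ↦ ?_
  exact (re_mellin_eq_integral (hf s hs)).symm

end RealMellin

section ZetaSign

open Set HurwitzZeta

lemma one_le_cosKernel_zero {t : ℝ} (ht : 0 < t) : 1 ≤ cosKernel 0 t := by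
  have hsum := hasSum_nat_cosKernel₀ 0 ht
  have hnonneg := hsum.nonneg fun n ↦ by
    simp only [mul_zero, zero_mul, Real.cos_zero, mul_one]; positivity
  simpa only [QuotientAddGroup.mk_zero, sub_nonneg] using hnonneg

lemma rpow_neg_half_le_evenKernel_zero {t : ℝ} (ht : 0 < t) :
    t ^ (-(1 / 2) : ℝ) ≤ evenKernel 0 t := by
  rw [evenKernel_functional_equation, Real.rpow_neg ht.le, ← one_div]
  exact le_mul_of_one_le_right (by positivity) (one_le_cosKernel_zero (by positivity))

lemma re_hurwitzEvenFEPair_zero_f_modif_nonneg (t : ℝ) :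
    0 ≤ ((hurwitzEvenFEPair 0).f_modif t).re := by
  rw [WeakFEPair.f_modif, Pi.add_apply, Complex.add_re]
  simp only [indicator_apply, apply_ite Complex.re, Complex.zero_re]
  refine add_nonneg ?_ ?_
  · split_ifs with ht
    · simpa [hurwitzEvenFEPair, evenKernel_eq_cosKernel_of_zero] using
        one_le_cosKernel_zero (zero_lt_one.trans (mem_Ioi.1 ht))
    · exact le_rfl
  · split_ifs with ht
    · simpa [hurwitzEvenFEPair] using rpow_neg_half_le_evenKernel_zero ht.1
    · exact le_rfl

lemma re_completedRiemannZeta₀_eq (s : ℝ) :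
    (completedRiemannZeta₀ s).re =
      (mellin (hurwitzEvenFEPair 0).f_modif ((s / 2 : ℝ) : ℂ)).re / 2 := by
  have hmellin : completedRiemannZeta₀ s = mellin (hurwitzEvenFEPair 0).f_modif (s / 2) / 2 := rfl
  rw [hmellin, Complex.div_ofNat_re, Complex.ofReal_div, Complex.ofReal_ofNat]

lemma mellinConvergent_hurwitzEvenFEPair_zero_f_modif (s : ℂ) :
    MellinConvergent (hurwitzEvenFEPair 0).f_modif s :=
  ((hurwitzEvenFEPair 0).isStrongFEPair_toStrongFEPair.hasMellin s).1

lemma re_completedRiemannZeta₀_nonneg (s : ℝ) : 0 ≤ (completedRiemannZeta₀ s).re := by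
  rw [re_completedRiemannZeta₀_eq]
  exact div_nonneg (re_mellin_nonneg (mellinConvergent_hurwitzEvenFEPair_zero_f_modif _)
    fun t _ ↦ re_hurwitzEvenFEPair_zero_f_modif_nonneg t) zero_le_two

lemma convexOn_re_completedRiemannZeta₀ :
    ConvexOn ℝ univ fun s : ℝ ↦ (completedRiemannZeta₀ s).re := by
  have hmellin := convexOn_re_mellin convex_univ
    (fun s _ ↦ mellinConvergent_hurwitzEvenFEPair_zero_f_modif s)
    fun t _ ↦ re_hurwitzEvenFEPair_zero_f_modif_nonneg t
  refine ((hmellin.comp_linearMap ((2⁻¹ : ℝ) • LinearMap.id)).smul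
    (inv_nonneg.2 zero_le_two)).congr fun s _ ↦ ?_
  simp only [Function.comp_apply, LinearMap.smul_apply, LinearMap.id_apply, smul_eq_mul,
    re_completedRiemannZeta₀_eq, div_eq_inv_mul]

lemma re_completedRiemannZeta₀_one_le : (completedRiemannZeta₀ 1).re ≤ 1 := by
  have hval : (completedRiemannZeta₀ 1).re =
      (Real.eulerMascheroniConstant - Real.log (4 * Real.pi)) / 2 + 1 := by
    rw [completedRiemannZeta₀_one, ← Complex.ofReal_ofNat 4, ← Complex.ofReal_mul,
      ← Complex.ofReal_log (by positivity)]
    norm_cast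
  have hlog : 1 ≤ Real.log (4 * Real.pi) := by
    rw [Real.le_log_iff_exp_le (by positivity)]
    linarith [Real.exp_one_lt_d9, Real.pi_gt_three]
  linarith [Real.eulerMascheroniConstant_lt_two_thirds]

lemma re_completedRiemannZeta₀_le_one {s : ℝ} (hs : s ∈ Icc 0 1) :
    (completedRiemannZeta₀ s).re ≤ 1 := by
  have hzero : completedRiemannZeta₀ 0 = completedRiemannZeta₀ 1 := by
    simpa using completedRiemannZeta₀_one_sub 1
  have hmax := convexOn_re_completedRiemannZeta₀.le_max_of_mem_Icc (mem_univ 0) (mem_univ 1) hs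
  simp only [Complex.ofReal_zero, Complex.ofReal_one, hzero, max_self] at hmax
  exact hmax.trans re_completedRiemannZeta₀_one_le

lemma re_riemannZeta_eq {s : ℝ} (hs : s ≠ 1) :
    (riemannZeta s).re = (s * (completedRiemannZeta₀ s).re - 1 / (1 - s)) /
      (2 * Real.pi ^ (-s / 2) * Real.Gamma (s / 2 + 1)) := by
  have hden : 2 * (Real.pi : ℂ) ^ (-(s : ℂ) / 2) * Complex.Gamma ((s : ℂ) / 2 + 1) =
      ((2 * Real.pi ^ (-s / 2) * Real.Gamma (s / 2 + 1) : ℝ) : ℂ) := by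
    push_cast [Complex.ofReal_cpow Real.pi_pos.le, ← Complex.Gamma_ofReal]
    rfl
  have hs' : 1 - s ≠ 0 := sub_ne_zero.2 hs.symm
  have hfrac : 1 + s / (1 - s) = 1 / (1 - s) := by field_simp; ring
  rw [riemannZeta_eq_mul_completedRiemannZeta₀, hden, Complex.div_ofReal_re, ← hfrac, ← sub_sub]
  rw [← Complex.ofReal_one, ← Complex.ofReal_sub, ← Complex.ofReal_div, Complex.sub_re,
    Complex.sub_re, Complex.re_ofReal_mul, Complex.ofReal_re, Complex.ofReal_re]

lemma zetaR_neg {s : ℝ} (hs : -2 < s) (hs1 : s < 1) : zetaR s < 0 := by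
  have hGamma : 0 < Real.Gamma (s / 2 + 1) := Real.Gamma_pos_of_pos (by linarith)
  rw [zetaR, re_riemannZeta_eq hs1.ne]
  refine div_neg_of_neg_of_pos (sub_neg.2 ?_) (by positivity)
  rcases le_or_gt s 0 with hs0 | hs0
  · calc s * (completedRiemannZeta₀ s).re ≤ 0 :=
          mul_nonpos_of_nonpos_of_nonneg hs0 (re_completedRiemannZeta₀_nonneg s)
      _ < 1 / (1 - s) := one_div_pos.2 (sub_pos.2 hs1)
  · calc s * (completedRiemannZeta₀ s).re ≤ s :=
          mul_le_of_le_one_right hs0.le (re_completedRiemannZeta₀_le_one ⟨hs0.le, hs1.le⟩)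
      _ < 1 := hs1
      _ < 1 / (1 - s) := (one_lt_div (sub_pos.2 hs1)).2 (by linarith)

end ZetaSign

section PSeries

lemma tsum_one_div_add_one_rpow_le {p : ℝ} (hp : 1 < p) :
    ∑' n : ℕ, 1 / (n + 1 : ℝ) ^ p ≤ 1 + 1 / (p - 1) := by
  have hterm : 0 ≤ ZetaAsymptotics.termTSum p :=
    tsum_nonneg fun n ↦ ZetaAsymptotics.term_nonneg (n + 1) p
  have := mul_nonneg (zero_le_one.trans hp.le) hterm
  linarith [ZetaAsymptotics.zeta_limit_aux1 hp]

lemma hasSum_int_one_div_abs_rpow {p : ℝ} (hp : 1 < p) :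
    HasSum (fun k : ℤ ↦ 1 / |(k : ℝ)| ^ p) (2 * ∑' n : ℕ, 1 / (n + 1 : ℝ) ^ p) := by
  have hshift : HasSum (fun n : ℕ ↦ 1 / (n + 1 : ℝ) ^ p) (∑' n : ℕ, 1 / (n + 1 : ℝ) ^ p) := by
    refine Summable.hasSum ?_
    exact_mod_cast (summable_nat_add_iff 1).2 (Real.summable_one_div_nat_rpow.2 hp)
  have habs (n : ℕ) : |(n + 1 : ℝ)| = n + 1 := abs_of_nonneg (by positivity)
  rw [two_mul]
  refine HasSum.of_nat_of_neg_add_one ?_ ?_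
  · rw [← hasSum_nat_add_iff' 1]
    simpa [habs, Real.zero_rpow (zero_lt_one.trans hp).ne'] using hshift
  · refine hshift.congr_fun fun n ↦ ?_
    rw [Int.cast_neg, abs_neg]
    push_cast
    rw [habs]

lemma sum_one_div_abs_int_rpow_le {p : ℝ} (hp : 1 < p) (s : Finset ℤ) :
    ∑ k ∈ s, 1 / |(k : ℝ)| ^ p ≤ 2 * (1 + 1 / (p - 1)) :=
  (sum_le_hasSum s (fun _ _ ↦ by positivity) (hasSum_int_one_div_abs_rpow hp)).trans <|
    mul_le_mul_of_nonneg_left (tsum_one_div_add_one_rpow_le hp) zero_le_two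

end PSeries

section DoublePrimedSum

variable {a b : ℤ}

lemma mul_dsum (r : ℝ) (g : ℤ → ℝ) : r * dsum a b g = dsum a b fun k ↦ r * g k := by
  simp only [dsum, Finset.mul_sum, mul_left_comm]

lemma dsum_mul_sub (c v : ℤ → ℝ) (x : ℝ) :
    dsum a b (fun k ↦ c k * (v k - x)) = dsum a b (fun k ↦ c k * v k) - dsum a b c * x := by
  simp only [dsum, Finset.sum_mul, ← Finset.sum_sub_distrib]
  exact Finset.sum_congr rfl fun k _ ↦ by ring

lemma dsum_le_sum {g : ℤ → ℝ} (hg : ∀ k, 0 ≤ g k) :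
    dsum a b g ≤ ∑ k ∈ (Finset.Icc a b).erase 0, g k :=
  Finset.sum_le_sum fun k _ ↦ mul_le_of_le_one_left (hg k) (by split_ifs <;> norm_num)

lemma abs_dsum_mul_le {c v : ℤ → ℝ} {M : ℝ} (hc : ∀ k, 0 ≤ c k) (hv : ∀ k, |v k| ≤ M) :
    |dsum a b fun k ↦ c k * v k| ≤ dsum a b c * M := by
  rw [dsum, dsum, Finset.sum_mul]
  refine (Finset.abs_sum_le_sum_abs _ _).trans (Finset.sum_le_sum fun k _ ↦ ?_)
  have hweight : 0 ≤ (if k = a ∨ k = b then (1 : ℝ) / 2 else 1) * c k :=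
    mul_nonneg (by split_ifs <;> norm_num) (hc k)
  rw [← mul_assoc, abs_mul, abs_of_nonneg hweight]
  exact mul_le_mul_of_nonneg_left (hv k) hweight

lemma dsum_one_div_abs_rpow_le {p : ℝ} (hp : 1 < p) :
    dsum a b (fun k ↦ 1 / |(k : ℝ)| ^ p) ≤ 2 * (1 + 1 / (p - 1)) :=
  (dsum_le_sum fun _ ↦ by positivity).trans (sum_one_div_abs_int_rpow_le hp _)

lemma mul_dsum_div_abs_mul_rpow {h : ℝ} (hh : 0 < h) (α : ℝ) (g : ℤ → ℝ) :
    h * dsum a b (fun k ↦ g k / |(k : ℝ) * h| ^ (1 + α)) =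
      h ^ (-α) * dsum a b fun k ↦ 1 / |(k : ℝ)| ^ (1 + α) * g k := by
  rw [mul_dsum, mul_dsum]
  congr! 2 with k
  rw [abs_mul, abs_of_pos hh, Real.mul_rpow (abs_nonneg _) hh.le, Real.rpow_add hh, Real.rpow_one,
    Real.rpow_neg hh.le]
  field_simp

end DoublePrimedSum

section Scheme

/-- Quadrature at `x = j h` for the fractional Laplacian on the domain `[-J h, J h]`, that is, for
the singular integral of `(u(x + y) - u(x)) / |y|^{1+α}` over those `y` with `x + y` in the domain;
the factor `C_α` is left out. The first summand corrects the trapezoidal rule for the omission of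
the singular node `k = 0`. -/
noncomputable def fracLaplacianQuadrature (α h : ℝ) (J : ℤ) (u : ℤ → ℝ) (j : ℤ) : ℝ :=
  -zetaR (α - 1) * h ^ (-α) * (u (j - 1) - 2 * u j + u (j + 1)) +
    h * dsum (-J - j) (J - j) fun k ↦ (u (j + k) - u j) / |(k : ℝ) * h| ^ (1 + α)

lemma Cconst_pos {α : ℝ} (hα : 0 < α) (hα2 : α < 2) : 0 < Cconst α := by
  have hden : 0 < Real.Gamma (1 - α / 2) := Real.Gamma_pos_of_pos (by linarith)
  unfold Cconst
  positivity

lemma abs_add_mul_fracLaplacianQuadrature_le {α h τ M : ℝ} {J j : ℤ} {u : ℤ → ℝ}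
    (hα : 0 < α) (hα2 : α < 2) (hh : 0 < h) (hτ : 0 ≤ τ)
    (hCFL : τ * h ^ (-α) * (2 * (1 + 1 / α - zetaR (α - 1))) ≤ 1) (hu : ∀ k, |u k| ≤ M) :
    |u j + τ * fracLaplacianQuadrature α h J u j| ≤ M := by
  set A := τ * h ^ (-α) with hA
  set z := zetaR (α - 1) with hz_def
  set S := dsum (-J - j) (J - j) fun k ↦ 1 / |(k : ℝ)| ^ (1 + α) with hS
  set B := dsum (-J - j) (J - j) fun k ↦ 1 / |(k : ℝ)| ^ (1 + α) * u (j + k) with hB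
  have hA0 : 0 ≤ A := by positivity
  have hz : z < 0 := zetaR_neg (by linarith) (by linarith)
  have hSle : S ≤ 2 * (1 + 1 / α) := by
    simpa only [add_sub_cancel_left] using dsum_one_div_abs_rpow_le (lt_add_of_pos_right 1 hα)
  have hBle : |B| ≤ S * M := abs_dsum_mul_le (fun _ ↦ by positivity) fun _ ↦ hu _
  have hdiag : 0 ≤ 1 - A * (S - 2 * z) := by
    have : A * (S - 2 * z) ≤ A * (2 * (1 + 1 / α - z)) := by gcongr; linarith
    linarith
  have hoff : 0 ≤ A * -z := mul_nonneg hA0 (by linarith)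
  have hneighbours : |u (j - 1) + u (j + 1)| ≤ 2 * M :=
    (abs_add_le _ _).trans (by linarith [hu (j - 1), hu (j + 1)])
  calc |u j + τ * fracLaplacianQuadrature α h J u j|
      = |(1 - A * (S - 2 * z)) * u j + A * -z * (u (j - 1) + u (j + 1)) + A * B| := by
        rw [fracLaplacianQuadrature, mul_dsum_div_abs_mul_rpow hh, dsum_mul_sub, ← hS, ← hB, hA,
          ← hz_def]
        ring_nf
    _ ≤ |(1 - A * (S - 2 * z)) * u j| + |A * -z * (u (j - 1) + u (j + 1))| + |A * B| :=
        abs_add_three _ _ _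
    _ ≤ (1 - A * (S - 2 * z)) * M + A * -z * (2 * M) + A * (S * M) := by
        rw [abs_mul, abs_mul _ (_ + _), abs_mul A B, abs_of_nonneg hdiag, abs_of_nonneg hoff,
          abs_of_nonneg hA0]
        gcongr
        exact hu j
    _ = M := by ring

end Scheme

/-- Error bound for the explicit Euler scheme with the natural condition:
the discretization error grows at most linearly, `|e^n_j| ≤ n Δt T̄`. -/
theorem stmt_4 (α ε h Δt Tbar : ℝ) (J : ℤ)
    (hα : 0 < α) (hα2 : α < 2) (hε : 0 < ε) (hJ : 1 ≤ J)
    (hh : 0 < h) (hΔt : 0 < Δt) (hTbar : 0 ≤ Tbar)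
    (e : ℕ → ℤ → ℝ) (T : ℕ → ℤ → ℝ)
    (hinit : ∀ j : ℤ, e 0 j = 0)
    (hbc : ∀ n : ℕ, ∀ j : ℤ, J ≤ |j| → e n j = 0)
    (hrec : ∀ n : ℕ, ∀ j : ℤ, |j| < J →
      e (n + 1) j =
        e n j
          - Δt * ε * Cconst α * zetaR (α - 1) * h ^ (-α) *
              (e n (j - 1) - 2 * e n j + e n (j + 1))
          + Δt * ε * Cconst α * h *
              dsum (-J - j) (J - j)
                (fun k => (e n (j + k) - e n j) / |(k : ℝ) * h| ^ (1 + α))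
          - Δt * T n j)
    (hT : ∀ n : ℕ, ∀ j : ℤ, |j| < J → |T n j| ≤ Tbar)
    (hCFL : Δt / h ^ α ≤ 1 / (2 * ε * Cconst α * (1 + 1 / α - zetaR (α - 1)))) :
    ∀ n : ℕ, ∀ j : ℤ, |e n j| ≤ (n : ℝ) * Δt * Tbar := by
  have hz : zetaR (α - 1) < 0 := zetaR_neg (by linarith) (by linarith)
  have hC : 0 < Cconst α := Cconst_pos hα hα2
  have hrate : 0 < 1 + 1 / α - zetaR (α - 1) := by linarith [one_div_pos.2 hα]
  have hCFL' : Δt * ε * Cconst α * h ^ (-α) * (2 * (1 + 1 / α - zetaR (α - 1))) ≤ 1 := by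
    calc _ = Δt / h ^ α * (2 * ε * Cconst α * (1 + 1 / α - zetaR (α - 1))) := by
          rw [Real.rpow_neg hh.le]; ring
      _ ≤ 1 := (le_div_iff₀ (by positivity)).1 hCFL
  intro n
  induction n with
  | zero => simp [hinit]
  | succ n ih =>
    intro j
    rcases le_or_gt J |j| with hj | hj
    · rw [hbc _ _ hj, abs_zero]
      positivity
    · calc |e (n + 1) j|
          = |e n j + Δt * ε * Cconst α * fracLaplacianQuadrature α h J (e n) j - Δt * T n j| := by
            rw [hrec n j hj, fracLaplacianQuadrature]
            ring_nf
        _ ≤ n * Δt * Tbar + Δt * Tbar := (abs_sub _ _).trans <| add_le_add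
            (abs_add_mul_fracLaplacianQuadrature_le hα hα2 hh (by positivity) hCFL' ih)
            (by rw [abs_mul, abs_of_pos hΔt]; gcongr; exact hT n j hj)
        _ = (n + 1 : ℕ) * Δt * Tbar := by push_cast; ring
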